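/- Assume dom f ≠ ∅ and P = ℝⁿ × ℝˢ, let p ∈ [1,∞), let (Ω,𝓕,ℙ) be atomless, and let 𝓡 : L^p(Ω,𝓕,ℙ) → ℝ be law-invariant, convex and nondecreasing. Let 𝓜 ⊆ 𝓜^p_s be locally uniformly ‖·‖^p-integrating. Then the mapping Q_𝓡 restricted to ℝⁿ × 𝓜 is real-valued and continuous, where 𝓜 carries the topology of weak convergence of probability measures. -/

import Mathlib

open MeasureTheory Matrix Set Topology Filter
open scoped ENNReal NNReal

noncomputable section

/-- Feasible set of the lower level problem: `{ y | A y ≤ T x + z }`. -/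
def LowerFeas {n m s : ℕ} (A : Matrix (Fin s) (Fin m) ℝ) (T : Matrix (Fin s) (Fin n) ℝ)
    (x : Fin n → ℝ) (z : Fin s → ℝ) : Set (Fin m → ℝ) :=
  {y | A.mulVec y ≤ T.mulVec x + z}

/-- Lower level optimal solution set `Ψ(x,z) = Argmin { dᵀy | A y ≤ T x + z }`. -/
def Psi {n m s : ℕ} (d : Fin m → ℝ) (A : Matrix (Fin s) (Fin m) ℝ)
    (T : Matrix (Fin s) (Fin n) ℝ) (x : Fin n → ℝ) (z : Fin s → ℝ) : Set (Fin m → ℝ) :=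
  {y | y ∈ LowerFeas A T x z ∧ ∀ y' ∈ LowerFeas A T x z, d ⬝ᵥ y ≤ d ⬝ᵥ y'}

/-- `f(x,z) = cᵀx + inf { qᵀ y | y ∈ Ψ(x,z) }` with values in `ℝ ∪ {±∞}`
(the infimum over the empty set being `+∞`). -/
def fE {n m s : ℕ} (c : Fin n → ℝ) (q d : Fin m → ℝ) (A : Matrix (Fin s) (Fin m) ℝ)
    (T : Matrix (Fin s) (Fin n) ℝ) (x : Fin n → ℝ) (z : Fin s → ℝ) : EReal :=
  ((c ⬝ᵥ x : ℝ) : EReal) + sInf ((fun y => ((q ⬝ᵥ y : ℝ) : EReal)) '' Psi d A T x z)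

/-- `P = { (x,z) | ∃ y, A y ≤ T x + z }`. -/
def Pfeas {n m s : ℕ} (A : Matrix (Fin s) (Fin m) ℝ) (T : Matrix (Fin s) (Fin n) ℝ) :
    Set ((Fin n → ℝ) × (Fin s → ℝ)) :=
  {p | (LowerFeas A T p.1 p.2).Nonempty}

/-- `dom f = { (x,z) | f(x,z) ∈ ℝ }`. -/
def domf {n m s : ℕ} (c : Fin n → ℝ) (q d : Fin m → ℝ) (A : Matrix (Fin s) (Fin m) ℝ)
    (T : Matrix (Fin s) (Fin n) ℝ) : Set ((Fin n → ℝ) × (Fin s → ℝ)) :=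
  {p | fE c q d A T p.1 p.2 ≠ ⊤ ∧ fE c q d A T p.1 p.2 ≠ ⊥}

/-- Topological support of a Borel measure. -/
def msupport {s : ℕ} (μ : Measure (Fin s → ℝ)) : Set (Fin s → ℝ) :=
  {z | ∀ U : Set (Fin s → ℝ), IsOpen U → z ∈ U → μ U ≠ 0}

/-- `P_Z = { x | (x,z) ∈ P for all z ∈ supp μ_Z }`. -/
def PZSet {n m s : ℕ} (A : Matrix (Fin s) (Fin m) ℝ) (T : Matrix (Fin s) (Fin n) ℝ)
    (μZ : Measure (Fin s → ℝ)) : Set (Fin n → ℝ) :=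
  {x | ∀ z ∈ msupport μZ, (x, z) ∈ Pfeas A T}


/-- A polyhedron: solution set of finitely many linear inequalities. -/
def IsPolyhedron {n : ℕ} (X : Set (Fin n → ℝ)) : Prop :=
  ∃ (k : ℕ) (B : Matrix (Fin k) (Fin n) ℝ) (b : Fin k → ℝ), X = {x | B.mulVec x ≤ b}

/-- An atomless probability space: every set of positive measure has a measurable
subset of strictly smaller positive measure. -/
def AtomlessSpace {Ω : Type*} [MeasurableSpace Ω] (μ : Measure Ω) : Prop :=
  ∀ S : Set Ω, MeasurableSet S → 0 < μ S →
    ∃ B ⊆ S, MeasurableSet B ∧ 0 < μ B ∧ μ B < μ S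

/-- A set of Borel probability measures is locally uniformly `‖·‖^p`-integrating if around
every member there is a weakly open neighbourhood on which the `p`-th moment tails vanish
uniformly (the limit as `a → ∞` of the antitone tail suprema being their infimum). -/
def LocUnifIntegrating {s : ℕ} (pr : ℝ) (M : Set (ProbabilityMeasure (Fin s → ℝ))) : Prop :=
  ∀ μ ∈ M, ∀ ε : ℝ, 0 < ε →
    ∃ N : Set (ProbabilityMeasure (Fin s → ℝ)), IsOpen N ∧ μ ∈ N ∧
      ⨅ a : ℝ, ⨆ ν ∈ M ∩ N,
        ∫⁻ z in {z : Fin s → ℝ | a ≤ ‖z‖}, ENNReal.ofReal (‖z‖ ^ pr)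
          ∂(ν : Measure (Fin s → ℝ)) ≤ ENNReal.ofReal ε

/-!
The value of the lower level problem is a parametric linear program, so by Fourier–Motzkin
elimination its epigraph is a polyhedral cone; doing this twice gives `f(x, z) = cᵀx + g(Tx + z)`
with `g` Lipschitz. Hence `f` is continuous with linear growth in `z`, the law of `f(x, ·)` under
`μ` depends continuously on `(x, μ)`, and its `p`-th tails are uniformly small near every
`(x, μ) ∈ ℝⁿ × 𝓜`. An atomless space carries a uniform variable `U`, and composing quantile
functions with `U` realizes these laws by random variables that converge a.s., hence by the control
of the tails in `L^p`. It remains to see that `𝓡` is continuous: a convex monotone function on a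
Banach lattice is bounded above near `0`, because a sequence refuting this could be chosen
summable, and would then be dominated by a single element.
-/

theorem upperBounds_inter_lowerBounds_nonempty {α : Type*} [LinearOrder α] [Nonempty α]
    {L U : Set α} (hL : L.Finite) (hU : U.Finite) (h : ∀ a ∈ L, ∀ b ∈ U, a ≤ b) :
    (upperBounds L ∩ lowerBounds U).Nonempty := by
  rcases L.eq_empty_or_nonempty with rfl | hne
  · simpa using! hU.bddBelow
  · obtain ⟨a, haL, ha⟩ := L.exists_max_image id hL hne
    exact ⟨a, ha, h a haL⟩

theorem dual_prod_apply {R E : Type*} [CommSemiring R] [AddCommMonoid E] [Module R E]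
    (l : Module.Dual R (E × R)) (e : E) (t : R) : l (e, t) = l (e, 0) + t * l (0, 1) := by
  rw [← smul_eq_mul, ← map_smul, ← map_add]
  simp

section FourierMotzkin

variable {𝕜 E E' : Type*} [Field 𝕜] [LinearOrder 𝕜] [IsStrictOrderedRing 𝕜]
  [AddCommGroup E] [Module 𝕜 E] [AddCommGroup E'] [Module 𝕜 E']

theorem exists_forall_nonneg_add_mul_iff {ι : Type*} {s : Set ι} (hs : s.Finite) (a b : ι → 𝕜) :
    (∃ t, ∀ i ∈ s, 0 ≤ a i + t * b i) ↔
      (∀ i ∈ s, b i = 0 → 0 ≤ a i) ∧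
        ∀ i ∈ s, 0 < b i → ∀ j ∈ s, b j < 0 → 0 ≤ b i * a j - b j * a i := by
  constructor
  · rintro ⟨t, ht⟩
    refine ⟨fun i hi hbi => by simpa [hbi] using ht i hi, fun i hi hbi j hj hbj => ?_⟩
    have := mul_nonneg hbi.le (ht j hj)
    have := mul_nonneg (neg_pos.2 hbj).le (ht i hi)
    linarith
  · rintro ⟨hzero, hpair⟩
    let root : ι → 𝕜 := fun i => -a i / b i
    obtain ⟨t, htL, htU⟩ : (upperBounds (root '' {i ∈ s | 0 < b i}) ∩
        lowerBounds (root '' {i ∈ s | b i < 0})).Nonempty := by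
      refine upperBounds_inter_lowerBounds_nonempty ((hs.subset (sep_subset _ _)).image _)
        ((hs.subset (sep_subset _ _)).image _) ?_
      rintro _ ⟨i, ⟨hi, hbi⟩, rfl⟩ _ ⟨j, ⟨hj, hbj⟩, rfl⟩
      rw [div_le_iff₀ hbi, div_mul_eq_mul_div, le_div_iff_of_neg hbj]
      linarith [hpair i hi hbi j hj hbj]
    refine ⟨t, fun i hi => ?_⟩
    rcases lt_trichotomy (b i) 0 with hbi | hbi | hbi
    · have := (le_div_iff_of_neg hbi).1 (htU (mem_image_of_mem root ⟨hi, hbi⟩))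
      linarith
    · simpa [hbi] using hzero i hi hbi
    · have := (div_le_iff₀ hbi).1 (htL (mem_image_of_mem root ⟨hi, hbi⟩))
      linarith

/-- Polyhedral cones in the half-space description: finite intersections of linear half-spaces
`{e | 0 ≤ l e}`. -/
def IsPolyhedralCone (C : PointedCone 𝕜 E) : Prop :=
  C.DualFG (LinearMap.id : Module.Dual 𝕜 E →ₗ[𝕜] Module.Dual 𝕜 E)

theorem isPolyhedralCone_iff {C : PointedCone 𝕜 E} :
    IsPolyhedralCone C ↔ ∃ F : Set (Module.Dual 𝕜 E), F.Finite ∧ ∀ e, e ∈ C ↔ ∀ l ∈ F, 0 ≤ l e := by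
  constructor
  · rintro ⟨F, rfl⟩
    exact ⟨F, F.finite_toSet, fun e => by simp [PointedCone.mem_dual]⟩
  · rintro ⟨F, hF, hC⟩
    have hCF : C = PointedCone.dual LinearMap.id F := by
      ext e
      simp [PointedCone.mem_dual, hC]
    rw [hCF]
    exact PointedCone.DualFG.dual_of_finite LinearMap.id hF

theorem isPolyhedralCone_positive_pi_prod {ι : Type*} [Finite ι] :
    IsPolyhedralCone (PointedCone.positive 𝕜 ((ι → 𝕜) × 𝕜)) :=
  isPolyhedralCone_iff.2 ⟨insert (LinearMap.snd 𝕜 (ι → 𝕜) 𝕜)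
    (range fun i => LinearMap.proj i ∘ₗ LinearMap.fst 𝕜 (ι → 𝕜) 𝕜), (finite_range _).insert _,
    fun e => by simp [Prod.le_def, Pi.le_def, and_comm]⟩

theorem mem_map_fst {C : PointedCone 𝕜 (E × E')} {e : E} :
    e ∈ C.map (LinearMap.fst 𝕜 E E') ↔ ∃ e', (e, e') ∈ C := by
  simp

namespace IsPolyhedralCone

theorem comap {C : PointedCone 𝕜 E} (hC : IsPolyhedralCone C) (f : E' →ₗ[𝕜] E) :
    IsPolyhedralCone (C.comap f) := by
  obtain ⟨F, hF, hC⟩ := isPolyhedralCone_iff.1 hC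
  exact isPolyhedralCone_iff.2 ⟨(·.comp f) '' F, hF.image _, fun e => by simp [hC]⟩

theorem map_fst {C : PointedCone 𝕜 (E × 𝕜)} (hC : IsPolyhedralCone C) :
    IsPolyhedralCone (C.map (LinearMap.fst 𝕜 E 𝕜)) := by
  obtain ⟨F, hF, hC⟩ := isPolyhedralCone_iff.1 hC
  let base : Module.Dual 𝕜 (E × 𝕜) → Module.Dual 𝕜 E := (·.comp (LinearMap.inl 𝕜 E 𝕜))
  let slope : Module.Dual 𝕜 (E × 𝕜) → 𝕜 := fun l => l (0, 1)
  have hfin : ∀ p : Module.Dual 𝕜 (E × 𝕜) → Prop, {l ∈ F | p l}.Finite :=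
    fun p => hF.subset (sep_subset _ _)
  refine isPolyhedralCone_iff.2 ⟨base '' {l ∈ F | slope l = 0} ∪
    image2 (fun l l' => slope l • base l' - slope l' • base l)
      {l ∈ F | 0 < slope l} {l ∈ F | slope l < 0},
    ((hfin _).image _).union ((hfin _).image2 _ (hfin _)), fun e => ?_⟩
  have helim := exists_forall_nonneg_add_mul_iff hF (base · e) slope
  have hmem : ∀ t, (e, t) ∈ C ↔ ∀ l ∈ F, 0 ≤ base l e + t * slope l := fun t => by
    rw [hC]
    exact forall₂_congr fun l _ => by rw [dual_prod_apply]; rfl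
  rw [mem_map_fst, exists_congr hmem, helim]
  simp only [mem_union, or_imp, forall_and, forall_mem_image, forall_mem_image2, mem_sep_iff,
    and_imp, LinearMap.sub_apply, LinearMap.smul_apply, smul_eq_mul]

theorem map_fst_pi (m : ℕ) {C : PointedCone 𝕜 (E × (Fin m → 𝕜))}
    (hC : IsPolyhedralCone C) : IsPolyhedralCone (C.map (LinearMap.fst 𝕜 E (Fin m → 𝕜))) := by
  induction m with
  | zero =>
    have hmap : C.map (LinearMap.fst 𝕜 E (Fin 0 → 𝕜)) =
        C.comap (LinearMap.inl 𝕜 E (Fin 0 → 𝕜)) := by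
      ext e
      simp [Unique.exists_iff, Subsingleton.elim default (0 : Fin 0 → 𝕜)]
    exact hmap ▸ hC.comap _
  | succ m ih =>
    let cons := (LinearMap.fst 𝕜 E (Fin m → 𝕜) ∘ₗ LinearMap.fst 𝕜 _ 𝕜).prod
      ((Fin.consLinearEquiv 𝕜 fun _ => 𝕜).toLinearMap ∘ₗ
        (LinearMap.snd 𝕜 _ 𝕜).prod (LinearMap.snd 𝕜 E (Fin m → 𝕜) ∘ₗ LinearMap.fst 𝕜 _ 𝕜))
    have hmap : C.map (LinearMap.fst 𝕜 E (Fin (m + 1) → 𝕜)) =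
        ((C.comap cons).map (LinearMap.fst 𝕜 _ 𝕜)).map (LinearMap.fst 𝕜 E _) := by
      ext e
      simp only [mem_map_fst, Fin.exists_fin_succ_pi]
      exact exists_comm
    exact hmap ▸ ih (hC.comap cons).map_fst

end IsPolyhedralCone

end FourierMotzkin

theorem exists_lipschitzWith_sup' {ι X : Type*} [PseudoEMetricSpace X] (s : Finset ι)
    (hs : s.Nonempty) {f : ι → X → ℝ} (hf : ∀ i, ∃ K, LipschitzWith K (f i)) :
    ∃ K, LipschitzWith K fun x => s.sup' hs (f · x) := by
  simp_rw [← Finset.sup'_apply]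
  exact Finset.sup'_induction hs f (p := fun g => ∃ K, LipschitzWith K g)
    (fun _ ⟨K, hg⟩ _ ⟨K', hg'⟩ => ⟨max K K', hg.max hg'⟩) fun i _ => hf i

theorem IsPolyhedralCone.exists_lipschitzWith_mem_iff_le {E : Type*} [NormedAddCommGroup E]
    [NormedSpace ℝ E] [FiniteDimensional ℝ E] {C : PointedCone ℝ (E × ℝ)}
    (hC : IsPolyhedralCone C) (hup : ((0, 1) : E × ℝ) ∈ C) (hdown : ((0, -1) : E × ℝ) ∉ C) :
    ∃ (K : ℝ≥0) (ψ : E → ℝ), LipschitzWith K ψ ∧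
      ∀ e, (∃ t, (e, t) ∈ C) → ∀ t, (e, t) ∈ C ↔ ψ e ≤ t := by
  obtain ⟨F, hF, hC⟩ := isPolyhedralCone_iff.1 hC
  have hslope : ∀ l ∈ F, 0 ≤ l (0, 1) := (hC _).1 hup
  let P := (hF.subset (sep_subset F fun l => 0 < l (0, 1))).toFinset
  have hP : ∀ {l}, l ∈ P ↔ l ∈ F ∧ 0 < l (0, 1) := by simp [P]
  have hPne : P.Nonempty := by
    obtain ⟨l, hl, hl0⟩ : ∃ l ∈ F, l (0, -1) < 0 := by simpa [hC] using hdown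
    rw [dual_prod_apply, Prod.mk_zero_zero, map_zero] at hl0
    exact ⟨l, hP.2 ⟨hl, by linarith⟩⟩
  let root : Module.Dual ℝ (E × ℝ) → E → ℝ := fun l e => -l (e, 0) / l (0, 1)
  have hroot : ∀ l, ∃ K, LipschitzWith K (root l) := fun l => by
    have hlin : root l = ⇑((-(l (0, 1))⁻¹) • LinearMap.toContinuousLinearMap
        (l ∘ₗ LinearMap.inl ℝ E ℝ)) := by
      ext e
      simp [root, div_eq_inv_mul]
    exact ⟨_, hlin ▸ ContinuousLinearMap.lipschitz _⟩
  obtain ⟨K, hK⟩ := exists_lipschitzWith_sup' P hPne hroot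
  refine ⟨K, _, hK, fun e ⟨t₀, ht₀⟩ t => ?_⟩
  rw [hC, Finset.sup'_le_iff]
  refine ⟨fun h l hl => ?_, fun h l hl => ?_⟩
  · have := h l (hP.1 hl).1
    rw [dual_prod_apply] at this
    rw [div_le_iff₀ (hP.1 hl).2]
    linarith
  · rcases (hslope l hl).eq_or_lt with hl0 | hl0
    · have := (hC _).1 ht₀ l hl
      rwa [dual_prod_apply, ← hl0, mul_zero] at this ⊢
    · have := (div_le_iff₀ hl0).1 (h l (hP.2 ⟨hl, hl0⟩))
      rw [dual_prod_apply]
      linarith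

section LinearProgram

variable {ι : Type*} {m : ℕ}

/-- The feasible set of a linear program with constraint matrix `A` and right-hand side `b`. -/
def feasibleSet (A : Matrix ι (Fin m) ℝ) (b : ι → ℝ) : Set (Fin m → ℝ) :=
  {y | A *ᵥ y ≤ b}

/-- The optimal solutions of minimizing `d ⬝ᵥ y` over `feasibleSet A b`. -/
def optimalSet (A : Matrix ι (Fin m) ℝ) (d : Fin m → ℝ) (b : ι → ℝ) : Set (Fin m → ℝ) :=
  {y ∈ feasibleSet A b | ∀ y' ∈ feasibleSet A b, d ⬝ᵥ y ≤ d ⬝ᵥ y'}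

/-- The epigraph of the optimal value as a function of the right-hand side, presented as the
projection of the cone of all `((b, t), y)` with `A *ᵥ y ≤ b` and `d ⬝ᵥ y ≤ t`. -/
def valueEpigraph (A : Matrix ι (Fin m) ℝ) (d : Fin m → ℝ) : PointedCone ℝ ((ι → ℝ) × ℝ) :=
  ((PointedCone.positive ℝ ((ι → ℝ) × ℝ)).comap
    (LinearMap.fst ℝ ((ι → ℝ) × ℝ) (Fin m → ℝ) -
      A.mulVecLin.prod (dotProductBilin ℝ ℝ d) ∘ₗ LinearMap.snd ℝ _ _)).map
    (LinearMap.fst ℝ ((ι → ℝ) × ℝ) (Fin m → ℝ))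

theorem mem_valueEpigraph {A : Matrix ι (Fin m) ℝ} {d : Fin m → ℝ} {b : ι → ℝ} {t : ℝ} :
    (b, t) ∈ valueEpigraph A d ↔ ∃ y ∈ feasibleSet A b, d ⬝ᵥ y ≤ t := by
  simp [valueEpigraph, feasibleSet, Prod.le_def]

theorem isPolyhedralCone_valueEpigraph [Finite ι] (A : Matrix ι (Fin m) ℝ) (d : Fin m → ℝ) :
    IsPolyhedralCone (valueEpigraph A d) :=
  (isPolyhedralCone_positive_pi_prod.comap _).map_fst_pi m

theorem zero_neg_one_notMem_valueEpigraph {A : Matrix ι (Fin m) ℝ} {d : Fin m → ℝ} {b : ι → ℝ}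
    (hfeas : (feasibleSet A b).Nonempty) (hbdd : BddBelow ((d ⬝ᵥ ·) '' feasibleSet A b)) :
    ((0, -1) : (ι → ℝ) × ℝ) ∉ valueEpigraph A d := by
  obtain ⟨y, hy⟩ := hfeas
  obtain ⟨B, hB⟩ := hbdd
  intro hray
  have hyB : B ≤ d ⬝ᵥ y := hB (mem_image_of_mem _ hy)
  have hmem := add_mem (mem_valueEpigraph.2 ⟨y, hy, le_rfl⟩)
    ((valueEpigraph A d).smul_mem (by linarith : 0 ≤ d ⬝ᵥ y - B + 1) hray)
  obtain ⟨y', hy', hle⟩ : ∃ y' ∈ feasibleSet A b, d ⬝ᵥ y' ≤ B - 1 := by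
    rw [← mem_valueEpigraph]
    convert hmem using 1
    ext <;> simp
    ring
  linarith [hB (mem_image_of_mem _ hy')]

theorem exists_lipschitzWith_isLeast_feasibleSet [Fintype ι] (A : Matrix ι (Fin m) ℝ)
    (d : Fin m → ℝ) {b₀ : ι → ℝ} (hfeas : (feasibleSet A b₀).Nonempty)
    (hbdd : BddBelow ((d ⬝ᵥ ·) '' feasibleSet A b₀)) :
    ∃ (K : ℝ≥0) (φ : (ι → ℝ) → ℝ), LipschitzWith K φ ∧
      ∀ b, (feasibleSet A b).Nonempty → IsLeast ((d ⬝ᵥ ·) '' feasibleSet A b) (φ b) := by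
  have hup : ((0, 1) : (ι → ℝ) × ℝ) ∈ valueEpigraph A d :=
    mem_valueEpigraph.2 ⟨0, by simp [feasibleSet], by simp⟩
  obtain ⟨K, φ, hK, hφ⟩ := (isPolyhedralCone_valueEpigraph A d).exists_lipschitzWith_mem_iff_le
    hup (zero_neg_one_notMem_valueEpigraph hfeas hbdd)
  refine ⟨K, φ, hK, fun b ⟨y, hy⟩ => ?_⟩
  have hφ : ∀ t, (b, t) ∈ valueEpigraph A d ↔ φ b ≤ t :=
    hφ b ⟨_, mem_valueEpigraph.2 ⟨y, hy, le_rfl⟩⟩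
  have hlower : φ b ∈ lowerBounds ((d ⬝ᵥ ·) '' feasibleSet A b) :=
    forall_mem_image.2 fun y' hy' => (hφ _).1 (mem_valueEpigraph.2 ⟨y', hy', le_rfl⟩)
  obtain ⟨y', hy', hle⟩ := mem_valueEpigraph.1 ((hφ (φ b)).2 le_rfl)
  exact ⟨⟨y', hy', hle.antisymm (hlower (mem_image_of_mem _ hy'))⟩, hlower⟩

theorem optimalSet_eq_feasibleSet_fromRows {A : Matrix ι (Fin m) ℝ} {d : Fin m → ℝ} {b : ι → ℝ}
    {v : ℝ} (hv : IsLeast ((d ⬝ᵥ ·) '' feasibleSet A b) v) :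
    optimalSet A d b =
      feasibleSet (fromRows A (replicateRow Unit d)) (Sum.elim b fun _ => v) := by
  obtain ⟨⟨y₀, hy₀, rfl⟩, hleast⟩ := hv
  ext y
  simp only [optimalSet, feasibleSet, mem_ofPred_eq, fromRows_mulVec,
    Sum.elim_le_elim_iff]
  refine and_congr_right fun _ => ⟨fun h _ => h y₀ hy₀, fun h y' hy' => ?_⟩
  exact (h ()).trans (hleast (mem_image_of_mem _ hy'))

theorem lipschitzWith_sumElim [Fintype ι] {κ : Type*} [Fintype κ] {K : ℝ≥0} {φ : (ι → ℝ) → ℝ}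
    (hφ : LipschitzWith K φ) :
    LipschitzWith (max 1 K) fun b : ι → ℝ => Sum.elim b fun _ : κ => φ b := by
  refine LipschitzWith.of_dist_le_mul fun b b' => (dist_pi_le_iff (by positivity)).2 ?_
  have hmax : dist (b, φ b) (b', φ b') ≤ (max 1 K : ℝ≥0) * dist b b' :=
    (LipschitzWith.id.prodMk hφ).dist_le_mul b b'
  rintro (i | j)
  · exact (dist_le_pi_dist b b' i).trans ((le_max_left _ _).trans hmax)
  · exact (le_max_right _ _).trans hmax

theorem exists_lipschitzWith_isLeast_optimalSet [Fintype ι] (A : Matrix ι (Fin m) ℝ)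
    (d q : Fin m → ℝ) (hfeas : ∀ b, (feasibleSet A b).Nonempty) {b₀ : ι → ℝ}
    (hopt : (optimalSet A d b₀).Nonempty) (hbdd : BddBelow ((q ⬝ᵥ ·) '' optimalSet A d b₀)) :
    ∃ (K : ℝ≥0) (g : (ι → ℝ) → ℝ), LipschitzWith K g ∧
      ∀ b, IsLeast ((q ⬝ᵥ ·) '' optimalSet A d b) (g b) := by
  obtain ⟨y₀, -, hy₀⟩ := id hopt
  obtain ⟨K, φ, hK, hφ⟩ := exists_lipschitzWith_isLeast_feasibleSet A d (hfeas b₀)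
    ⟨d ⬝ᵥ y₀, forall_mem_image.2 hy₀⟩
  have hopt_eq := fun b => optimalSet_eq_feasibleSet_fromRows (hφ b (hfeas b))
  rw [hopt_eq] at hopt hbdd
  obtain ⟨K', φ', hK', hφ'⟩ := exists_lipschitzWith_isLeast_feasibleSet _ q hopt hbdd
  refine ⟨_, _, hK'.comp (lipschitzWith_sumElim hK), fun b => ?_⟩
  obtain ⟨⟨y, hy, hyv⟩, -⟩ := hφ b (hfeas b)
  have hne : (optimalSet A d b).Nonempty :=
    ⟨y, hy, fun y' hy' => hyv.trans_le ((hφ b (hfeas b)).2 (mem_image_of_mem _ hy'))⟩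
  rw [hopt_eq] at hne ⊢
  exact hφ' _ hne

end LinearProgram

section BilevelValue

variable {n m s : ℕ} (c : Fin n → ℝ) (q d : Fin m → ℝ) (A : Matrix (Fin s) (Fin m) ℝ)
  (T : Matrix (Fin s) (Fin n) ℝ)

theorem Psi_eq_optimalSet (x : Fin n → ℝ) (z : Fin s → ℝ) :
    Psi d A T x z = optimalSet A d (T *ᵥ x + z) :=
  rfl

variable {c q d A T}

theorem feasibleSet_nonempty_of_Pfeas_eq_univ (hP : Pfeas A T = univ) (b : Fin s → ℝ) :
    (feasibleSet A b).Nonempty := by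
  have : ((0, b) : (Fin n → ℝ) × (Fin s → ℝ)) ∈ Pfeas A T := hP ▸ mem_univ _
  simpa [Pfeas, LowerFeas] using! this

theorem Psi_nonempty_of_fE_ne_top {x : Fin n → ℝ} {z : Fin s → ℝ}
    (h : fE c q d A T x z ≠ ⊤) : (Psi d A T x z).Nonempty := by
  contrapose! h
  simp [fE, h]

theorem bddBelow_image_Psi_of_fE_ne_bot {x : Fin n → ℝ} {z : Fin s → ℝ}
    (h : fE c q d A T x z ≠ ⊥) : BddBelow ((q ⬝ᵥ ·) '' Psi d A T x z) := by
  contrapose! h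
  have hbot : sInf ((fun y => ((q ⬝ᵥ y : ℝ) : EReal)) '' Psi d A T x z) = ⊥ := by
    refine (EReal.eq_bot_iff_forall_lt _).2 fun B => sInf_lt_iff.2 ?_
    obtain ⟨_, ⟨y, hy, rfl⟩, hyB⟩ := not_bddBelow_iff.1 h B
    exact ⟨_, mem_image_of_mem _ hy, EReal.coe_lt_coe_iff.2 hyB⟩
  rw [fE, hbot, EReal.add_bot]

theorem exists_lipschitzWith_fE_eq (hdom : (domf c q d A T).Nonempty) (hP : Pfeas A T = univ) :
    ∃ (K : ℝ≥0) (g : (Fin s → ℝ) → ℝ), LipschitzWith K g ∧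
      ∀ x z, fE c q d A T x z = ((c ⬝ᵥ x + g (T *ᵥ x + z) : ℝ) : EReal) := by
  obtain ⟨⟨x₀, z₀⟩, htop, hbot⟩ := hdom
  obtain ⟨K, g, hK, hg⟩ := exists_lipschitzWith_isLeast_optimalSet A d q
    (feasibleSet_nonempty_of_Pfeas_eq_univ hP) (Psi_nonempty_of_fE_ne_top htop)
    (bddBelow_image_Psi_of_fE_ne_bot hbot)
  refine ⟨K, g, hK, fun x z => ?_⟩
  have hleast := EReal.coe_strictMono.monotone.map_isLeast (hg (T *ᵥ x + z))
  rw [image_image] at hleast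
  rw [fE, Psi_eq_optimalSet, hleast.isGLB.sInf_eq, EReal.coe_add]

theorem continuous_toReal_fE (hdom : (domf c q d A T).Nonempty) (hP : Pfeas A T = univ) :
    Continuous fun w : (Fin n → ℝ) × (Fin s → ℝ) => (fE c q d A T w.1 w.2).toReal := by
  obtain ⟨K, g, hK, hg⟩ := exists_lipschitzWith_fE_eq hdom hP
  have := hK.continuous
  simp only [hg, EReal.toReal_coe]
  fun_prop

theorem exists_eventually_abs_toReal_fE_le (hdom : (domf c q d A T).Nonempty)
    (hP : Pfeas A T = univ) (x₀ : Fin n → ℝ) :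
    ∃ D L : ℝ≥0, ∀ᶠ x in 𝓝 x₀, ∀ z, |(fE c q d A T x z).toReal| ≤ D + L * ‖z‖ := by
  obtain ⟨K, g, hK, hg⟩ := exists_lipschitzWith_fE_eq hdom hP
  have hcont : Continuous fun x : Fin n → ℝ => |c ⬝ᵥ x + g (T *ᵥ x)| := by
    have := hK.continuous
    fun_prop
  refine ⟨‖c ⬝ᵥ x₀ + g (T *ᵥ x₀)‖₊ + 1, K,
    (hcont.continuousAt.eventually_le_const (lt_add_one _)).mono fun x hx z => ?_⟩
  have hLip : |g (T *ᵥ x + z) - g (T *ᵥ x)| ≤ K * ‖z‖ := by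
    simpa [dist_eq_norm] using hK.dist_le_mul (T *ᵥ x + z) (T *ᵥ x)
  rw [hg, EReal.toReal_coe]
  calc |c ⬝ᵥ x + g (T *ᵥ x + z)|
      = |(c ⬝ᵥ x + g (T *ᵥ x)) + (g (T *ᵥ x + z) - g (T *ᵥ x))| := by ring_nf
    _ ≤ |c ⬝ᵥ x + g (T *ᵥ x)| + |g (T *ᵥ x + z) - g (T *ᵥ x)| := abs_add_le _ _
    _ ≤ _ := add_le_add hx hLip

end BilevelValue

theorem continuous_of_convexOn_of_monotone {E : Type*} [NormedAddCommGroup E] [Lattice E]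
    [HasSolidNorm E] [IsOrderedAddMonoid E] [NormedSpace ℝ E] [CompleteSpace E] {R : E → ℝ}
    (hconv : ConvexOn ℝ univ R) (hmono : Monotone R) : Continuous R := by
  obtain ⟨k, hk⟩ : ∃ k : ℕ, ∀ y, ‖y‖ < (1 / 2 : ℝ) ^ k → R y ≤ k := by
    -- Otherwise some summable sequence `y k` has `R (y k) > k`, but `R (∑' j, |y j|)` bounds it.
    by_contra! H
    choose y hy hRy using H
    have hsum : Summable fun k => |y k| :=
      .of_norm_bounded summable_geometric_two fun k => (norm_abs_eq_norm (y k)).trans_le (hy k).le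
    have hle : ∀ k, y k ≤ ∑' j, |y j| := fun k =>
      (le_abs_self _).trans (hsum.le_tsum k fun j _ => abs_nonneg _)
    obtain ⟨k, hk⟩ := exists_nat_gt (R (∑' j, |y j|))
    linarith [hRy k, hmono (hle k)]
  have hbdd : (𝓝 0).IsBoundedUnder (· ≤ ·) R := by
    refine ⟨k, eventually_map.2 ?_⟩
    filter_upwards [Metric.ball_mem_nhds (0 : E) (by positivity : (0 : ℝ) < (1 / 2) ^ k)] with y hy
    exact hk y (mem_ball_zero_iff.1 hy)
  have hex : ∃ y₀ ∈ (univ : Set E), (𝓝 y₀).IsBoundedUnder (· ≤ ·) R := ⟨0, mem_univ _, hbdd⟩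
  exact continuousOn_univ.1 <|
    ((hconv.continuousOn_tfae isOpen_univ univ_nonempty).out 3 1).1 hex

section Quantile

open ProbabilityTheory

/-- The quantile function (left-continuous generalized inverse of the distribution function). It
is meaningful only for levels `u ∈ Ioo 0 1`: elsewhere the set may be empty or unbounded below, and
`sInf` takes the junk value `0`. -/
def quantile (ν : Measure ℝ) (u : ℝ) : ℝ :=
  sInf {t | u ≤ cdf ν t}

instance isProbabilityMeasure_restrict_Ioo_zero_one :
    IsProbabilityMeasure (volume.restrict (Ioo (0 : ℝ) 1)) :=
  ⟨by simp⟩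

variable {ν : Measure ℝ} {u : ℝ}

theorem quantile_le_iff (hu : u ∈ Ioo (0 : ℝ) 1) {t : ℝ} :
    quantile ν u ≤ t ↔ u ≤ cdf ν t := by
  have hne : {t | u ≤ cdf ν t}.Nonempty :=
    ((tendsto_cdf_atTop ν).eventually_const_le hu.2).exists
  obtain ⟨a, ha⟩ := ((tendsto_cdf_atBot ν).eventually_lt_const hu.1).exists
  have hbdd : BddBelow {t | u ≤ cdf ν t} :=
    ⟨a, fun t ht => le_of_not_gt fun hta => (ht.trans (monotone_cdf ν hta.le)).not_gt ha⟩
  refine ⟨fun h => ?_, fun h => csInf_le hbdd h⟩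
  have hright : Tendsto (cdf ν) (𝓝[>] t) (𝓝 (cdf ν t)) :=
    ((cdf ν).right_continuous t).tendsto.mono_left (nhdsWithin_mono _ Ioi_subset_Ici_self)
  refine ge_of_tendsto hright ?_
  filter_upwards [self_mem_nhdsWithin] with t' ht'
  obtain ⟨t'', hut'', ht''⟩ := exists_lt_of_csInf_lt hne (h.trans_lt ht')
  exact hut''.trans (monotone_cdf ν ht''.le)

theorem lt_quantile_iff (hu : u ∈ Ioo (0 : ℝ) 1) {t : ℝ} : t < quantile ν u ↔ cdf ν t < u := by
  rw [← not_le, quantile_le_iff hu, not_le]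

theorem monotoneOn_quantile (ν : Measure ℝ) : MonotoneOn (quantile ν) (Ioo 0 1) :=
  fun _ hu _ hv huv => (quantile_le_iff hu).2 (huv.trans ((quantile_le_iff hv).1 le_rfl))

theorem hasLaw_quantile (ν : Measure ℝ) [IsProbabilityMeasure ν] :
    HasLaw (quantile ν) ν (volume.restrict (Ioo (0 : ℝ) 1)) where
  aemeasurable := aemeasurable_restrict_of_monotoneOn measurableSet_Ioo (monotoneOn_quantile ν)
  map_eq := by
    have hmeas := aemeasurable_restrict_of_monotoneOn (μ := volume) measurableSet_Ioo
      (monotoneOn_quantile ν)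
    refine Measure.ext_of_Iic _ _ fun t => ?_
    have hpre : quantile ν ⁻¹' Iic t ∩ Ioo 0 1 = Iic (cdf ν t) ∩ Ioo 0 1 := by
      ext u
      exact and_congr_left fun hu => quantile_le_iff hu
    have hae : (Ioo 0 1 ∩ Iic (cdf ν t) : Set ℝ) =ᵐ[volume] (Ioc 0 1 ∩ Iic (cdf ν t) : Set ℝ) :=
      Ioo_ae_eq_Ioc.inter (ae_eq_refl _)
    rw [Measure.map_apply_of_aemeasurable hmeas measurableSet_Iic,
      Measure.restrict_apply' measurableSet_Ioo, hpre, inter_comm, measure_congr hae, Ioc_inter_Iic,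
      min_eq_right (cdf_le_one ν t), Real.volume_Ioc, sub_zero, ofReal_cdf]

theorem cdf_quantile [IsProbabilityMeasure ν] [NullSingletonClass ν] (hu : u ∈ Ioo (0 : ℝ) 1) :
    cdf ν (quantile ν u) = u := by
  refine le_antisymm ?_ ((quantile_le_iff hu).1 le_rfl)
  have hleft : Function.leftLim (cdf ν) (quantile ν u) ≤ u := by
    refine le_of_tendsto ((monotone_cdf ν).tendsto_leftLim _) ?_
    filter_upwards [self_mem_nhdsWithin] with t ht
    exact ((lt_quantile_iff hu).1 ht).le
  have hatom : (cdf ν).measure {quantile ν u} = 0 := by rw [measure_cdf, measure_singleton]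
  rw [StieltjesFunction.measure_singleton, ENNReal.ofReal_eq_zero] at hatom
  linarith

theorem hasLaw_cdf (ν : Measure ℝ) [IsProbabilityMeasure ν] [NullSingletonClass ν] :
    HasLaw (cdf ν) (volume.restrict (Ioo (0 : ℝ) 1)) ν where
  aemeasurable := (monotone_cdf ν).measurable.aemeasurable
  map_eq := by
    have hinv : cdf ν ∘ quantile ν =ᵐ[volume.restrict (Ioo (0 : ℝ) 1)] id :=
      (ae_restrict_mem measurableSet_Ioo).mono fun u hu => cdf_quantile hu
    calc ν.map (cdf ν)
        = ((volume.restrict (Ioo (0 : ℝ) 1)).map (quantile ν)).map (cdf ν) := by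
          rw [(hasLaw_quantile ν).map_eq]
      _ = (volume.restrict (Ioo (0 : ℝ) 1)).map (cdf ν ∘ quantile ν) :=
          AEMeasurable.map_map_of_aemeasurable (monotone_cdf ν).measurable.aemeasurable
            (hasLaw_quantile ν).aemeasurable
      _ = volume.restrict (Ioo (0 : ℝ) 1) := by rw [Measure.map_congr hinv, Measure.map_id]

variable {ι : Type*} {l : Filter ι} {νs : ι → ProbabilityMeasure ℝ} {ν₀ : ProbabilityMeasure ℝ}

theorem tendsto_cdf_of_measure_singleton_eq_zero (h : Tendsto νs l (𝓝 ν₀)) {t : ℝ}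
    (ht : (ν₀ : Measure ℝ) {t} = 0) :
    Tendsto (fun i => cdf (νs i : Measure ℝ) t) l (𝓝 (cdf (ν₀ : Measure ℝ) t)) := by
  simp only [cdf_eq_real]
  rw [← frontier_Iic] at ht
  exact (ENNReal.tendsto_toReal (measure_ne_top _ _)).comp
    (ProbabilityMeasure.tendsto_measure_of_null_frontier_of_tendsto' h ht)

theorem exists_mem_Ioo_measure_singleton_eq_zero (ν : Measure ℝ) [SFinite ν] {a b : ℝ}
    (hab : a < b) : ∃ t ∈ Ioo a b, ν {t} = 0 := by
  have hatoms : {t | 0 < ν {t}}.Countable :=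
    Measure.countable_meas_pos_of_disjoint_iUnion (fun _ => measurableSet_singleton _)
      fun _ _ hne => disjoint_singleton.2 hne
  obtain ⟨t, ht, hab⟩ := (hatoms.dense_compl ℝ).exists_between hab
  exact ⟨t, hab, by simpa using ht⟩

theorem tendsto_quantile_of_continuousAt (h : Tendsto νs l (𝓝 ν₀)) (hu : u ∈ Ioo (0 : ℝ) 1)
    (hcont : ContinuousAt (quantile ν₀) u) :
    Tendsto (fun i => quantile (νs i) u) l (𝓝 (quantile ν₀ u)) := by
  refine tendsto_order.2 ⟨fun a ha => ?_, fun a ha => ?_⟩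
  · obtain ⟨t, ⟨hat, htq⟩, ht⟩ := exists_mem_Ioo_measure_singleton_eq_zero (ν₀ : Measure ℝ) ha
    filter_upwards [(tendsto_cdf_of_measure_singleton_eq_zero h ht).eventually_lt_const
      ((lt_quantile_iff hu).1 htq)] with i hi
    exact hat.trans ((lt_quantile_iff hu).2 hi)
  · obtain ⟨u', ⟨hu'a, hu'⟩, huu'⟩ : ∃ u', (quantile ν₀ u' < a ∧ u' ∈ Ioo (0 : ℝ) 1) ∧ u < u' :=
      (((hcont.eventually_lt_const ha).and (isOpen_Ioo.mem_nhds hu)).filter_mono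
        nhdsWithin_le_nhds |>.and (self_mem_nhdsWithin (s := Ioi u))).exists
    obtain ⟨t, ⟨hqt, hta⟩, ht⟩ := exists_mem_Ioo_measure_singleton_eq_zero (ν₀ : Measure ℝ) hu'a
    have hut : u < cdf (ν₀ : Measure ℝ) t := huu'.trans_le ((quantile_le_iff hu').1 hqt.le)
    filter_upwards [(tendsto_cdf_of_measure_singleton_eq_zero h ht).eventually_const_lt hut]
      with i hi
    exact ((quantile_le_iff hu).2 hi.le).trans_lt hta

theorem ae_tendsto_quantile (h : Tendsto νs l (𝓝 ν₀)) :
    ∀ᵐ u ∂volume.restrict (Ioo (0 : ℝ) 1),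
      Tendsto (fun i => quantile (νs i) u) l (𝓝 (quantile ν₀ u)) := by
  have hdisc := (monotoneOn_quantile (ν₀ : Measure ℝ)).countable_not_continuousWithinAt
  filter_upwards [ae_restrict_mem measurableSet_Ioo,
    ae_restrict_of_ae (measure_eq_zero_iff_ae_notMem.1 (hdisc.measure_zero volume))] with u hu hcont
  refine tendsto_quantile_of_continuousAt h hu ?_
  exact (not_not.1 fun hc => hcont ⟨hu, hc⟩).continuousAt (isOpen_Ioo.mem_nhds hu)

end Quantile

section Atomless

open ProbabilityTheory

variable {Ω : Type*}

/-- The cell of the binary tree of sets in which `B S` splits the cell `S`; a node is addressed by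
the list of turns leading to it, the most recent one first. -/
def splitCell (B : Set Ω → Set Ω) : List Bool → Set Ω
  | [] => univ
  | true :: l => splitCell B l ∩ B (splitCell B l)
  | false :: l => splitCell B l \ B (splitCell B l)

open scoped Classical in
/-- The turn which `ω` takes at each node of the tree of cells, including the nodes that do not lie
on the branch of `ω`. -/
def splitCode (B : Set Ω → Set Ω) (ω : Ω) (l : List Bool) : Bool :=
  decide (ω ∈ B (splitCell B l))

/-- The first `k` turns of the branch singled out by a choice `φ` of a turn at each node. -/
def branch (φ : List Bool → Bool) : ℕ → List Bool
  | 0 => []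
  | k + 1 => φ (branch φ k) :: branch φ k

theorem mem_splitCell_branch_splitCode (B : Set Ω → Set Ω) (ω : Ω) (k : ℕ) :
    ω ∈ splitCell B (branch (splitCode B ω) k) := by
  induction k with
  | zero => exact mem_univ ω
  | succ k ih =>
    by_cases h : ω ∈ B (splitCell B (branch (splitCode B ω) k)) <;>
      simp [branch, splitCell, splitCode, h, ih]

variable [MeasurableSpace Ω] {μ : Measure Ω}

/-- `B` splits `S` into two measurable parts, the smaller of which has at least half of the measure
that it could have in any such splitting. -/
structure IsGreedySplit (μ : Measure Ω) (S B : Set Ω) : Prop where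
  measurableSet : MeasurableSet B
  half_le : ∀ B', MeasurableSet B' →
    min (μ (S ∩ B')) (μ (S \ B')) / 2 ≤ min (μ (S ∩ B)) (μ (S \ B))

theorem exists_isGreedySplit (μ : Measure Ω) [IsFiniteMeasure μ] (S : Set Ω) :
    ∃ B, IsGreedySplit μ S B := by
  set v : ℝ≥0∞ := ⨆ B : {B : Set Ω // MeasurableSet B}, min (μ (S ∩ B)) (μ (S \ B))
  have hle : ∀ B, MeasurableSet B → min (μ (S ∩ B)) (μ (S \ B)) ≤ v := fun B hB =>
    le_iSup (fun B : {B : Set Ω // MeasurableSet B} => min (μ (S ∩ B)) (μ (S \ B))) ⟨B, hB⟩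
  have hv : v ≠ ⊤ := ne_top_of_le_ne_top (measure_ne_top μ S)
    (iSup_le fun B => (min_le_left _ _).trans (measure_mono inter_subset_left))
  rcases eq_or_ne v 0 with h0 | h0
  · refine ⟨∅, .empty, fun B hB => ?_⟩
    rw [le_zero_iff.1 ((hle B hB).trans h0.le), ENNReal.zero_div]
    exact zero_le
  · obtain ⟨B, hB⟩ := lt_iSup_iff.1 (ENNReal.half_lt_self h0 hv)
    exact ⟨B, B.2, fun B' hB' => (ENNReal.div_le_div_right (hle B' hB') 2).trans hB.le⟩

theorem AtomlessSpace.measure_iInter_eq_zero [IsFiniteMeasure μ] (hμ : AtomlessSpace μ)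
    {C B : ℕ → Set Ω} (hC : ∀ k, MeasurableSet (C k)) (hB : ∀ k, IsGreedySplit μ (C k) (B k))
    (hstep : ∀ k, C (k + 1) = C k ∩ B k ∨ C (k + 1) = C k \ B k) : μ (⋂ k, C k) = 0 := by
  by_contra hne
  obtain ⟨B₀, hB₀C, hB₀, hpos, hlt⟩ := hμ _ (.iInter hC) (pos_iff_ne_zero.2 hne)
  have hpos' : 0 < μ ((⋂ k, C k) \ B₀) := by
    rw [measure_sdiff hB₀C hB₀.nullMeasurableSet (measure_ne_top _ _)]
    exact tsub_pos_of_lt hlt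
  set δ := min (μ B₀) (μ ((⋂ k, C k) \ B₀)) / 2
  have hδ : 0 < δ := ENNReal.half_pos (lt_min hpos hpos').ne'
  have hδle : ∀ k, δ ≤ min (μ (C k ∩ B k)) (μ (C k \ B k)) := fun k => by
    refine le_trans ?_ ((hB k).half_le B₀ hB₀)
    have hCk : ⋂ k, C k ⊆ C k := iInter_subset _ k
    exact ENNReal.div_le_div_right (min_le_min (measure_mono (subset_inter (hB₀C.trans hCk) le_rfl))
      (measure_mono (sdiff_subset_sdiff_left hCk))) 2
  have hdrop : ∀ k, μ (C (k + 1)) + δ ≤ μ (C k) := fun k => by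
    rw [← measure_inter_add_sdiff (μ := μ) (C k) (hB k).measurableSet]
    rcases hstep k with h | h <;> rw [h]
    · exact add_le_add_right ((hδle k).trans (min_le_right _ _)) _
    · rw [add_comm]
      exact add_le_add_left ((hδle k).trans (min_le_left _ _)) _
  have hinf : (⨅ k, μ (C k)) + δ ≤ ⨅ k, μ (C k) :=
    le_iInf fun k => (add_le_add_left (iInf_le _ (k + 1)) δ).trans (hdrop k)
  have hfin : ⨅ k, μ (C k) ≠ ⊤ := ne_top_of_le_ne_top (measure_ne_top μ (C 0)) (iInf_le _ 0)
  exact (ENNReal.lt_add_right hfin hδ.ne').not_ge hinf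

variable {B : Set Ω → Set Ω}

theorem measurableSet_splitCell (hB : ∀ S, MeasurableSet (B S)) :
    ∀ l, MeasurableSet (splitCell B l)
  | [] => .univ
  | true :: l => (measurableSet_splitCell hB l).inter (hB _)
  | false :: l => (measurableSet_splitCell hB l).diff (hB _)

theorem measurable_splitCode (hB : ∀ S, MeasurableSet (B S)) : Measurable (splitCode B) := by
  refine measurable_pi_lambda _ fun l => measurable_to_bool ?_
  convert hB (splitCell B l) using 1
  ext ω
  simp [splitCode]

theorem AtomlessSpace.nullSingletonClass_map_splitCode [IsFiniteMeasure μ] (hμ : AtomlessSpace μ)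
    (hB : ∀ S, IsGreedySplit μ S (B S)) : NullSingletonClass (μ.map (splitCode B)) where
  measure_singleton φ := by
    have hBm : ∀ S, MeasurableSet (B S) := fun S => (hB S).measurableSet
    rw [Measure.map_apply (measurable_splitCode hBm) (measurableSet_singleton φ)]
    have hsub : splitCode B ⁻¹' {φ} ⊆ ⋂ k, splitCell B (branch φ k) := by
      rintro ω rfl
      exact mem_iInter.2 (mem_splitCell_branch_splitCode B ω)
    refine measure_mono_null hsub (hμ.measure_iInter_eq_zero
      (fun k => measurableSet_splitCell hBm _) (fun k => hB _) fun k => ?_)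
    cases h : φ (branch φ k) <;> simp [branch, splitCell, h]

theorem AtomlessSpace.exists_hasLaw_uniform [IsProbabilityMeasure μ] (hμ : AtomlessSpace μ) :
    ∃ U : Ω → ℝ, HasLaw U (volume.restrict (Ioo 0 1)) μ := by
  choose B hB using exists_isGreedySplit μ
  have hcode : Measurable (splitCode B) := measurable_splitCode fun S => (hB S).measurableSet
  have hemb := measurableEmbedding_embeddingReal (List Bool → Bool)
  set X : Ω → ℝ := embeddingReal (List Bool → Bool) ∘ splitCode B
  have hX : Measurable X := hemb.measurable.comp hcode
  have : IsProbabilityMeasure (μ.map X) := Measure.isProbabilityMeasure_map hX.aemeasurable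
  have : NullSingletonClass (μ.map X) := ⟨fun t => by
    have := hμ.nullSingletonClass_map_splitCode hB
    rw [← Measure.map_map hemb.measurable hcode, hemb.map_apply]
    exact ((subsingleton_singleton).preimage hemb.injective).measure_zero _⟩
  exact ⟨cdf (μ.map X) ∘ X, (hasLaw_cdf (μ.map X)).comp ⟨hX.aemeasurable, rfl⟩⟩

end Atomless

section Clip

/-- The point of the interval `[-C, C]` closest to `y`. The size of `y - clip C y` in `L^p` measures
the tail beyond the level `C`. -/
def clip (C : ℝ≥0) (y : ℝ) : ℝ :=
  max (-C) (min C y)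

variable {C : ℝ≥0}

theorem continuous_clip (C : ℝ≥0) : Continuous (clip C) :=
  continuous_const.max (continuous_const.min continuous_id)

theorem abs_clip_le (C : ℝ≥0) (y : ℝ) : |clip C y| ≤ C :=
  abs_le.2 ⟨le_max_left _ _, max_le (neg_le_self C.2) (min_le_left _ _)⟩

theorem abs_sub_clip_le {y t : ℝ} (ht : 0 ≤ t) (hy : |y| ≤ C + t) : |y - clip C y| ≤ t := by
  have : (0 : ℝ) ≤ C := C.2
  obtain ⟨hy₁, hy₂⟩ := abs_le.1 hy
  rw [clip, abs_le]
  rcases max_cases (-C : ℝ) (min C y) with h | h <;> rcases min_cases (C : ℝ) y with h' | h' <;>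
    constructor <;> linarith

variable {α ι : Type*} [MeasurableSpace α] {μ : Measure α} {p : ℝ≥0∞} {l : Filter ι}
  {Y : ι → α → ℝ} {Y₀ : α → ℝ}

theorem memLp_of_eLpNorm_sub_clip_lt_top [IsFiniteMeasure μ] (hY : AEStronglyMeasurable Y₀ μ)
    (htail : eLpNorm (fun a => Y₀ a - clip C (Y₀ a)) p μ < ⊤) : MemLp Y₀ p μ := by
  have hclip : AEStronglyMeasurable (fun a => clip C (Y₀ a)) μ :=
    (continuous_clip C).comp_aestronglyMeasurable hY
  have hmem : MemLp (fun a => clip C (Y₀ a)) p μ :=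
    .of_bound hclip C (.of_forall fun a => abs_clip_le C (Y₀ a))
  convert hmem.add ⟨hY.sub hclip, htail⟩ using 1
  ext a
  exact (add_sub_cancel _ _).symm

theorem tendsto_eLpNorm_sub_of_abs_le [IsFiniteMeasure μ] [l.IsCountablyGenerated] (hp : p ≠ ⊤)
    (hY : ∀ i, AEStronglyMeasurable (Y i) μ) (hY₀ : AEStronglyMeasurable Y₀ μ)
    (hbound : ∀ i a, |Y i a| ≤ C) (hbound₀ : ∀ a, |Y₀ a| ≤ C)
    (hlim : ∀ᵐ a ∂μ, Tendsto (fun i => Y i a) l (𝓝 (Y₀ a))) :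
    Tendsto (fun i => eLpNorm (Y i - Y₀) p μ) l (𝓝 0) := by
  rcases eq_or_ne p 0 with rfl | hp0
  · simp only [eLpNorm_exponent_zero, tendsto_const_nhds]
  have hpos : 0 < p.toReal := ENNReal.toReal_pos hp0 hp
  have hint : Tendsto (fun i => ∫⁻ a, ‖(Y i - Y₀) a‖ₑ ^ p.toReal ∂μ) l (𝓝 (∫⁻ _, 0 ∂μ)) := by
    refine tendsto_lintegral_filter_of_dominated_convergence'
      (fun _ => (ENNReal.ofReal (C + C)) ^ p.toReal)
      (.of_forall fun i => ((hY i).sub hY₀).enorm.pow_const _) (.of_forall fun i => ?_) ?_ ?_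
    · refine .of_forall fun a => ENNReal.rpow_le_rpow ?_ hpos.le
      rw [← ofReal_norm, Real.norm_eq_abs]
      exact ENNReal.ofReal_le_ofReal
        ((abs_sub _ _).trans (add_le_add (hbound i a) (hbound₀ a)))
    · rw [lintegral_const]
      finiteness
    · filter_upwards [hlim] with a ha
      have hzero := (ha.sub_const (Y₀ a)).enorm.ennrpow_const p.toReal
      rwa [sub_self, enorm_zero, ENNReal.zero_rpow_of_pos hpos] at hzero
  simp only [eLpNorm_eq_lintegral_rpow_enorm_toReal hp0 hp]
  have hroot := hint.ennrpow_const (1 / p.toReal)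
  rwa [lintegral_zero, ENNReal.zero_rpow_of_pos (one_div_pos.2 hpos)] at hroot

-- `Y i - Y₀` is the sum of two tails and of the difference of the clipped functions.
theorem tendsto_eLpNorm_sub_of_tail [IsFiniteMeasure μ] [l.IsCountablyGenerated] (hp₁ : 1 ≤ p)
    (hp : p ≠ ⊤) (hY : ∀ i, AEStronglyMeasurable (Y i) μ) (hY₀ : AEStronglyMeasurable Y₀ μ)
    (hlim : ∀ᵐ a ∂μ, Tendsto (fun i => Y i a) l (𝓝 (Y₀ a)))
    (htail : ∀ ε ≠ 0, ∃ C : ℝ≥0, (∀ᶠ i in l, eLpNorm (fun a => Y i a - clip C (Y i a)) p μ ≤ ε) ∧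
      eLpNorm (fun a => Y₀ a - clip C (Y₀ a)) p μ ≤ ε) :
    Tendsto (fun i => eLpNorm (Y i - Y₀) p μ) l (𝓝 0) := by
  refine ENNReal.tendsto_nhds_zero.2 fun ε hε => ?_
  have hε3 : ε / 3 ≠ 0 := (ENNReal.div_pos hε.ne' (by simp)).ne'
  obtain ⟨C, hC, hC₀⟩ := htail (ε / 3) hε3
  have hclip : ∀ {Z : α → ℝ}, AEStronglyMeasurable Z μ →
      AEStronglyMeasurable (fun a => clip C (Z a)) μ :=
    (continuous_clip C).comp_aestronglyMeasurable
  have hclipped := tendsto_eLpNorm_sub_of_abs_le hp (fun i => hclip (hY i)) (hclip hY₀)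
    (fun i a => abs_clip_le C (Y i a)) (fun a => abs_clip_le C (Y₀ a))
    (hlim.mono fun a ha => ((continuous_clip C).tendsto _).comp ha)
  filter_upwards [hC, ENNReal.tendsto_nhds_zero.1 hclipped (ε / 3) (pos_iff_ne_zero.2 hε3)]
    with i hi hi'
  set tail : (α → ℝ) → α → ℝ := fun Z a => Z a - clip C (Z a)
  set mid : α → ℝ := (fun a => clip C (Y i a)) - fun a => clip C (Y₀ a)
  calc eLpNorm (Y i - Y₀) p μ
      = eLpNorm (tail (Y i) + mid - tail Y₀) p μ := by
        congr 1
        ext a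
        simp only [tail, mid, Pi.add_apply, Pi.sub_apply]
        ring
    _ ≤ eLpNorm (tail (Y i)) p μ + eLpNorm mid p μ + eLpNorm (tail Y₀) p μ := by
        have htl : ∀ {Z : α → ℝ}, AEStronglyMeasurable Z μ → AEStronglyMeasurable (tail Z) μ :=
          fun hZ => hZ.sub (hclip hZ)
        have hmid : AEStronglyMeasurable mid μ := (hclip (hY i)).sub (hclip hY₀)
        exact (eLpNorm_sub_le ((htl (hY i)).add hmid) (htl hY₀) hp₁).trans
          (add_le_add_left (eLpNorm_add_le (htl (hY i)) hmid hp₁) _)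
    _ ≤ ε / 3 + ε / 3 + ε / 3 := by gcongr
    _ = ε := ENNReal.add_thirds ε

end Clip

section Coupling

open ProbabilityTheory

variable {Ω : Type*} [MeasurableSpace Ω] {P : Measure Ω} {p : ℝ≥0∞}

theorem AtomlessSpace.exists_continuous_Lp_map_eq [IsProbabilityMeasure P] (hP : AtomlessSpace P)
    [hp₁ : Fact (1 ≤ p)] (hp : p ≠ ⊤) {ι : Type*} [TopologicalSpace ι] [FirstCountableTopology ι]
    {ν : ι → ProbabilityMeasure ℝ} (hν : Continuous ν)
    (htail : ∀ i, ∀ ε ≠ 0, ∃ C : ℝ≥0, ∀ᶠ j in 𝓝 i,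
      eLpNorm (fun y => y - clip C y) p (ν j : Measure ℝ) ≤ ε) :
    ∃ Y : ι → Lp ℝ p P, Continuous Y ∧ ∀ i, Measure.map (Y i : Ω → ℝ) P = ν i := by
  obtain ⟨U, hU⟩ := hP.exists_hasLaw_uniform
  set Y : ι → Ω → ℝ := fun i => quantile (ν i : Measure ℝ) ∘ U
  have hlaw : ∀ i, HasLaw (Y i) (ν i) P := fun i => (hasLaw_quantile (ν i : Measure ℝ)).comp hU
  have hmeas : ∀ i, AEStronglyMeasurable (Y i) P := fun i =>
    (hlaw i).aemeasurable.aestronglyMeasurable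
  have htailY : ∀ (C : ℝ≥0) i, eLpNorm (fun ω => Y i ω - clip C (Y i ω)) p P =
      eLpNorm (fun y => y - clip C y) p (ν i : Measure ℝ) := fun C i => by
    rw [← (hlaw i).map_eq]
    exact (eLpNorm_map_measure (continuous_id.sub (continuous_clip C)).aestronglyMeasurable
      (hlaw i).aemeasurable).symm
  have hmem : ∀ i, MemLp (Y i) p P := fun i => by
    obtain ⟨C, hC⟩ := htail i 1 one_ne_zero
    refine memLp_of_eLpNorm_sub_clip_lt_top (C := C) (hmeas i) ?_
    exact (htailY C i).trans_lt (hC.self_of_nhds.trans_lt ENNReal.one_lt_top)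
  refine ⟨fun i => (hmem i).toLp (Y i), continuous_iff_continuousAt.2 fun i => ?_, fun i => ?_⟩
  · refine (Lp.tendsto_Lp_iff_tendsto_eLpNorm'' Y hmem (Y i) (hmem i)).2 ?_
    refine tendsto_eLpNorm_sub_of_tail hp₁.out hp hmeas (hmeas i) ?_ fun ε hε => ?_
    · have hquantile := ae_tendsto_quantile (hν.tendsto i)
      rw [← hU.map_eq] at hquantile
      exact ae_of_ae_map hU.aemeasurable hquantile
    · simp only [htailY]
      exact (htail i ε hε).imp fun C hC => ⟨hC, hC.self_of_nhds⟩
  · rw [Measure.map_congr (hmem i).coeFn_toLp, (hlaw i).map_eq]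

end Coupling

section Tails

theorem eLpNorm_indicator_norm_le_ofReal {E : Type*} [NormedAddCommGroup E] [MeasurableSpace E]
    [OpensMeasurableSpace E] {ν : Measure E} {p : ℝ≥0∞} (hp₀ : p ≠ 0) (hp : p ≠ ⊤) {a : ℝ}
    {δ : ℝ≥0} (h : ∫⁻ z in {z | a ≤ ‖z‖}, ENNReal.ofReal (‖z‖ ^ p.toReal) ∂ν ≤ δ ^ p.toReal) :
    eLpNorm ({z | a ≤ ‖z‖}.indicator norm) p ν ≤ δ := by
  have hms : MeasurableSet {z : E | a ≤ ‖z‖} := measurableSet_le measurable_const measurable_norm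
  have hpow : ∀ z : E, ENNReal.ofReal (‖z‖ ^ p.toReal) = ‖‖z‖‖ₑ ^ p.toReal := fun z => by
    rw [enorm_norm, ← ofReal_norm, ENNReal.ofReal_rpow_of_nonneg (norm_nonneg z) p.toReal_nonneg]
  rw [eLpNorm_indicator_eq_eLpNorm_restrict hms, eLpNorm_eq_lintegral_rpow_enorm_toReal hp₀ hp,
    one_div, ENNReal.rpow_inv_le_iff (ENNReal.toReal_pos hp₀ hp)]
  simpa only [hpow] using h

theorem LocUnifIntegrating.exists_eventually_eLpNorm_indicator_norm_le {s : ℕ} {p : ℝ≥0∞}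
    (hp₀ : p ≠ 0) (hp : p ≠ ⊤) {M : Set (ProbabilityMeasure (Fin s → ℝ))}
    (hM : LocUnifIntegrating p.toReal M) {μ : ProbabilityMeasure (Fin s → ℝ)} (hμ : μ ∈ M)
    {δ : ℝ≥0} (hδ : 0 < δ) :
    ∃ a : ℝ, ∀ᶠ ν : ProbabilityMeasure (Fin s → ℝ) in 𝓝[M] μ,
      eLpNorm ({z | a ≤ ‖z‖}.indicator norm) p (ν : Measure (Fin s → ℝ)) ≤ δ := by
  set η : ℝ≥0 := δ ^ p.toReal
  have hη : 0 < η := NNReal.rpow_pos hδ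
  obtain ⟨N, hN, hμN, hinf⟩ := hM μ hμ (η / 2 : ℝ≥0) (half_pos hη)
  rw [ENNReal.ofReal_coe_nnreal] at hinf
  obtain ⟨a, ha⟩ := iInf_lt_iff.1 (hinf.trans_lt (ENNReal.coe_lt_coe.2 (half_lt_self hη)))
  refine ⟨a, ?_⟩
  filter_upwards [self_mem_nhdsWithin, mem_nhdsWithin_of_mem_nhds (hN.mem_nhds hμN)] with ν hνM hνN
  refine eLpNorm_indicator_norm_le_ofReal hp₀ hp ?_
  rw [← ENNReal.coe_rpow_of_nonneg _ p.toReal_nonneg]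
  exact (le_iSup₂_of_le ν ⟨hνM, hνN⟩ le_rfl).trans ha.le

theorem eLpNorm_sub_clip_le {E : Type*} [NormedAddCommGroup E] [MeasurableSpace E] {F : E → ℝ}
    {D L : ℝ≥0} (hF : ∀ z, |F z| ≤ D + L * ‖z‖) (p : ℝ≥0∞) (ν : Measure E) (a : ℝ) :
    eLpNorm (fun z => F z - clip (D + L * a.toNNReal) (F z)) p ν ≤
      L * eLpNorm ({z | a ≤ ‖z‖}.indicator norm) p ν := by
  refine eLpNorm_le_nnreal_smul_eLpNorm_of_ae_le_mul (.of_forall fun z => ?_) p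
  rw [← NNReal.coe_le_coe, NNReal.coe_mul, coe_nnnorm, coe_nnnorm, Real.norm_eq_abs]
  refine abs_sub_clip_le (by positivity) ((hF z).trans ?_)
  push_cast
  by_cases hz : a ≤ ‖z‖
  · rw [indicator_of_mem (by exact hz), norm_norm]
    have : 0 ≤ (L : ℝ) * max a 0 := by positivity
    rw [Real.coe_toNNReal']
    linarith
  · rw [indicator_of_notMem (by exact hz), norm_zero, mul_zero, add_zero, Real.coe_toNNReal']
    gcongr
    exact (not_le.1 hz).le.trans (le_max_left _ _)

theorem LocUnifIntegrating.exists_eventually_eLpNorm_sub_clip_map_le {s : ℕ} {p : ℝ≥0∞}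
    (hp₀ : p ≠ 0) (hp : p ≠ ⊤) {M : Set (ProbabilityMeasure (Fin s → ℝ))}
    (hM : LocUnifIntegrating p.toReal M) {X : Type*} {l : Filter X} {f : X → (Fin s → ℝ) → ℝ}
    (hf : ∀ x, Measurable (f x)) {D L : ℝ≥0} (hgrowth : ∀ᶠ x in l, ∀ z, |f x z| ≤ D + L * ‖z‖)
    {μ : ProbabilityMeasure (Fin s → ℝ)} (hμ : μ ∈ M) {ε : ℝ≥0∞} (hε : ε ≠ 0) :
    ∃ C : ℝ≥0, ∀ᶠ w : X × ProbabilityMeasure (Fin s → ℝ) in l ×ˢ 𝓝[M] μ,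
      eLpNorm (fun y => y - clip C y) p (Measure.map (f w.1) w.2) ≤ ε := by
  obtain ⟨δ, hδ, hδε⟩ := ENNReal.exists_nnreal_pos_mul_lt (ENNReal.coe_ne_top (r := L)) hε
  obtain ⟨a, ha⟩ := hM.exists_eventually_eLpNorm_indicator_norm_le hp₀ hp hμ hδ
  refine ⟨D + L * a.toNNReal, ?_⟩
  filter_upwards [hgrowth.prod_mk ha] with w hw
  calc eLpNorm (fun y => y - clip (D + L * a.toNNReal) y) p (Measure.map (f w.1) w.2)
      = eLpNorm (fun z => f w.1 z - clip (D + L * a.toNNReal) (f w.1 z)) p w.2 :=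
        eLpNorm_map_measure (continuous_id.sub (continuous_clip _)).aestronglyMeasurable
          (hf w.1).aemeasurable
    _ ≤ L * eLpNorm ({z | a ≤ ‖z‖}.indicator norm) p (w.2 : Measure (Fin s → ℝ)) :=
        eLpNorm_sub_clip_le hw.1 p w.2 a
    _ ≤ L * δ := by gcongr; exact hw.2
    _ ≤ ε := by rw [mul_comm]; exact hδε.le

end Tails

section Main

open TopologicalSpace

theorem continuous_probabilityMeasure_map_uncurry {X E F : Type*} [TopologicalSpace X]
    [SecondCountableTopology X] [PseudoMetrizableSpace X] [TopologicalSpace E]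
    [SecondCountableTopology E] [PseudoMetrizableSpace E] [MeasurableSpace E] [BorelSpace E]
    [TopologicalSpace F] [MeasurableSpace F] [BorelSpace F] {f : X → E → F}
    (hf : Continuous fun w : X × E => f w.1 w.2) :
    Continuous fun w : X × ProbabilityMeasure E =>
      w.2.map (hf.comp (.prodMk_right w.1)).aemeasurable := by
  borelize X
  have hcont : Continuous fun w : X × ProbabilityMeasure E =>
      ((diracProba w.1).prod w.2).map hf.aemeasurable :=
    (ProbabilityMeasure.continuous_map hf).comp <| ProbabilityMeasure.continuous_prod.comp <|
      (continuous_diracProba.comp continuous_fst).prodMk continuous_snd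
  convert hcont using 2 with w
  refine Subtype.ext ?_
  change Measure.map (f w.1) w.2 =
    Measure.map (fun w : X × E => f w.1 w.2) ((Measure.dirac w.1).prod (w.2 : Measure E))
  rw [Measure.dirac_prod, Measure.map_map hf.measurable measurable_prodMk_left]
  rfl

theorem QR_realValued_and_weakly_continuous_general {s : ℕ} {X : Type*} [TopologicalSpace X]
    [SecondCountableTopology X] [PseudoMetrizableSpace X] {f : X → (Fin s → ℝ) → ℝ}
    (hf : Continuous fun w : X × (Fin s → ℝ) => f w.1 w.2)
    (hgrowth : ∀ x₀, ∃ D L : ℝ≥0, ∀ᶠ x in 𝓝 x₀, ∀ z, |f x z| ≤ D + L * ‖z‖)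
    {Ω : Type*} [MeasurableSpace Ω] {P : Measure Ω} [IsProbabilityMeasure P]
    (hP : AtomlessSpace P) {p : ℝ≥0∞} [hp₁ : Fact (1 ≤ p)] (hp : p ≠ ⊤)
    {β : Type*} [TopologicalSpace β] {R : Lp ℝ p P → β} (hR : Continuous R)
    {M : Set (ProbabilityMeasure (Fin s → ℝ))} (hM : LocUnifIntegrating p.toReal M)
    {Q : X → ProbabilityMeasure (Fin s → ℝ) → β}
    (hQ : ∀ x μ, μ ∈ M → ∀ Y : Lp ℝ p P,
      Measure.map (Y : Ω → ℝ) P = Measure.map (f x) (μ : Measure (Fin s → ℝ)) → Q x μ = R Y) :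
    (∀ x, ∀ μ ∈ M, ∃ Y : Lp ℝ p P,
      Measure.map (Y : Ω → ℝ) P = Measure.map (f x) (μ : Measure (Fin s → ℝ))) ∧
    ContinuousOn (fun w : X × ProbabilityMeasure (Fin s → ℝ) => Q w.1 w.2) (univ ×ˢ M) := by
  set S : Set (X × ProbabilityMeasure (Fin s → ℝ)) := univ ×ˢ M
  have hfx : ∀ x, Measurable (f x) := fun x => (hf.comp (.prodMk_right x)).measurable
  let law : S → ProbabilityMeasure ℝ := fun w => w.1.2.map (hfx w.1.1).aemeasurable
  have hlaw : Continuous law :=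
    (continuous_probabilityMeasure_map_uncurry hf).comp continuous_subtype_val
  have htail : ∀ w, ∀ ε ≠ 0, ∃ C : ℝ≥0, ∀ᶠ v in 𝓝 w,
      eLpNorm (fun y => y - clip C y) p (law v : Measure ℝ) ≤ ε := by
    intro w ε hε
    obtain ⟨D, L, hDL⟩ := hgrowth w.1.1
    obtain ⟨C, hC⟩ := hM.exists_eventually_eLpNorm_sub_clip_map_le
      (zero_lt_one.trans_le hp₁.out).ne' hp hfx hDL w.2.2 hε
    rw [← nhdsWithin_univ, ← nhdsWithin_prod_eq, ← map_nhds_subtype_val w] at hC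
    exact ⟨C, hC⟩
  obtain ⟨Y, hY, hYlaw⟩ := hP.exists_continuous_Lp_map_eq hp hlaw htail
  refine ⟨fun x μ hμ => ⟨Y ⟨(x, μ), mem_univ x, hμ⟩, hYlaw _⟩, ?_⟩
  refine continuousOn_iff_continuous_domRestrict.2 ((hR.comp hY).congr fun w => ?_)
  exact (hQ _ _ w.2.2 _ (hYlaw w)).symm

end Main

theorem QR_realValued_and_weakly_continuous {n m s : ℕ}
    (c : Fin n → ℝ) (q d : Fin m → ℝ)
    (A : Matrix (Fin s) (Fin m) ℝ) (T : Matrix (Fin s) (Fin n) ℝ)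
    (hdom : (domf c q d A T).Nonempty) (hP : Pfeas A T = Set.univ)
    {Ω : Type*} [MeasureSpace Ω] [IsProbabilityMeasure (volume : Measure Ω)]
    (hatomless : AtomlessSpace (volume : Measure Ω))
    (p : ℝ≥0∞) [hp1 : Fact (1 ≤ p)] (hptop : p ≠ ⊤)
    (R : Lp ℝ p (volume : Measure Ω) → ℝ)
    (hLI : ∀ Y₁ Y₂ : Lp ℝ p (volume : Measure Ω),
      Measure.map (Y₁ : Ω → ℝ) volume = Measure.map (Y₂ : Ω → ℝ) volume → R Y₁ = R Y₂)
    (hconv : ConvexOn ℝ Set.univ R)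
    (hmono : ∀ Y₁ Y₂ : Lp ℝ p (volume : Measure Ω),
      (Y₁ : Ω → ℝ) ≤ᵐ[volume] (Y₂ : Ω → ℝ) → R Y₁ ≤ R Y₂)
    (M : Set (ProbabilityMeasure (Fin s → ℝ)))
    (hMmom : ∀ μ ∈ M,
      ∫⁻ z, ENNReal.ofReal (‖z‖ ^ p.toReal) ∂(μ : Measure (Fin s → ℝ)) < ⊤)
    (hLUI : LocUnifIntegrating p.toReal M)
    (Q : (Fin n → ℝ) → ProbabilityMeasure (Fin s → ℝ) → ℝ)
    (hQ : ∀ x μ, μ ∈ M → ∀ Y : Lp ℝ p (volume : Measure Ω),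
      Measure.map (Y : Ω → ℝ) volume
        = Measure.map (fun z => (fE c q d A T x z).toReal) (μ : Measure (Fin s → ℝ)) →
      Q x μ = R Y) :
    (∀ x, ∀ μ ∈ M, ∃ Y : Lp ℝ p (volume : Measure Ω),
      Measure.map (Y : Ω → ℝ) volume
        = Measure.map (fun z => (fE c q d A T x z).toReal) (μ : Measure (Fin s → ℝ))) ∧
    ContinuousOn (fun pr : (Fin n → ℝ) × ProbabilityMeasure (Fin s → ℝ) => Q pr.1 pr.2)
      (Set.univ ×ˢ M) := by
  exact QR_realValued_and_weakly_continuous_general (continuous_toReal_fE hdom hP)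
    (exists_eventually_abs_toReal_fE_le hdom hP) hatomless hptop
    (continuous_of_convexOn_of_monotone hconv fun Y₁ Y₂ h => hmono Y₁ Y₂ ((Lp.coeFn_le Y₁ Y₂).2 h))
    hLUI hQ

end
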